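/- For every database instance D : T → A → U and every finite set M of matching dependencies, the set of minimally resolved instances of D with respect to M is nonempty. -/

import Mathlib

/-- A matching dependency: a finite set `L` of attribute pairs (the similarity
condition to the left of the arrow) and a finite set `R` of attribute pairs
(the pairs of attributes to be matched, to the right of the arrow). -/
structure MD (A : Type*) where
  L : Finset (A × A)
  R : Finset (A × A)

/-- `simPairs sim L D t₁ t₂` : the tuples `t₁, t₂` of instance `D` satisfy the
similarity condition given by the attribute pairs in `L`. -/
def simPairs {T A U : Type*} (sim : A → A → U → U → Prop)
    (L : Finset (A × A)) (D : T → A → U) (t₁ t₂ : T) : Prop :=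
  ∀ p ∈ L, sim p.1 p.2 (D t₁ p.1) (D t₂ p.2)

/-- `Modifiable sim M D t c` : the value of attribute `c` of tuple `t` is
modifiable in instance `D` with respect to the set `M` of MDs (least such predicate). -/
inductive Modifiable {T A U : Type*} (sim : A → A → U → U → Prop)
    (M : Finset (MD A)) (D : T → A → U) : T → A → Prop where
  | left_ne {m : MD A} {t s : T} {c e : A} :
      m ∈ M → (c, e) ∈ m.R → simPairs sim m.L D t s →
      D t c ≠ D s e → Modifiable sim M D t c
  | left_mod {m : MD A} {t s : T} {c e : A} :
      m ∈ M → (c, e) ∈ m.R → simPairs sim m.L D t s →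
      Modifiable sim M D s e → Modifiable sim M D t c
  | right_ne {m : MD A} {t s : T} {c e : A} :
      m ∈ M → (e, c) ∈ m.R → simPairs sim m.L D s t →
      D s e ≠ D t c → Modifiable sim M D t c
  | right_mod {m : MD A} {t s : T} {c e : A} :
      m ∈ M → (e, c) ∈ m.R → simPairs sim m.L D s t →
      Modifiable sim M D s e → Modifiable sim M D t c

/-- `(D, D') ⊨ M`. -/
def Sat {T A U : Type*} (sim : A → A → U → U → Prop)
    (M : Finset (MD A)) (D D' : T → A → U) : Prop :=
  (∀ m ∈ M, ∀ t₁ t₂ : T, simPairs sim m.L D t₁ t₂ →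
      ∀ p ∈ m.R, D' t₁ p.1 = D' t₂ p.2) ∧
  (∀ (t : T) (g : A), ¬ Modifiable sim M D t g → D' t g = D t g)

/-- `D'` is a resolved instance of `D` wrt `M`: there is a finite (possibly empty)
chain of instances `D₁, …, Dₙ` with `(D,D₁) ⊨ M`, `(Dᵢ,Dᵢ₊₁) ⊨ M`, `(Dₙ,D') ⊨ M`,
and `(D',D') ⊨ M`. -/
def ResolvedInstance {T A U : Type*} (sim : A → A → U → U → Prop)
    (M : Finset (MD A)) (D D' : T → A → U) : Prop :=
  ∃ L : List (T → A → U), List.Chain (Sat sim M) D (L ++ [D']) ∧ Sat sim M D' D'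

/-- Number of changed values in going from `D` to `D'`. -/
noncomputable def numChanges {T A U : Type*} (D D' : T → A → U) : ℕ :=
  Nat.card {p : T × A // D p.1 p.2 ≠ D' p.1 p.2}

/-- `D'` is a minimally resolved instance (MRI) of `D` wrt `M`. -/
def IsMRI {T A U : Type*} (sim : A → A → U → U → Prop)
    (M : Finset (MD A)) (D D' : T → A → U) : Prop :=
  ResolvedInstance sim M D D' ∧
  ∀ D'' : T → A → U, ResolvedInstance sim M D D'' →
    numChanges D D' ≤ numChanges D D''

/-- The edge relation of the similarity graph `G_D` on the vertex set `T × A`. -/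
def SimEdge {T A U : Type*} (sim : A → A → U → U → Prop)
    (M : Finset (MD A)) (D : T → A → U) (p q : T × A) : Prop :=
  ∃ m ∈ M, (simPairs sim m.L D p.1 q.1 ∧ (p.2, q.2) ∈ m.R) ∨
           (simPairs sim m.L D q.1 p.1 ∧ (q.2, p.2) ∈ m.R)

open Classical in
/-- One step: set all modifiable positions to `u`. -/
noncomputable def stepTo {T A U : Type*} (sim : A → A → U → U → Prop)
    (M : Finset (MD A)) (u : U) (D : T → A → U) : T → A → U :=
  fun t c => if Modifiable sim M D t c then u else D t c

theorem sat_stepTo {T A U : Type*} (sim : A → A → U → U → Prop)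
    (M : Finset (MD A)) (u : U) (D : T → A → U) :
    Sat sim M D (stepTo sim M u D) := by
  refine ⟨?_, ?_⟩
  · rintro m hm t s hs ⟨c, e⟩ hp
    simp only [stepTo]
    by_cases h1 : Modifiable sim M D t c
    · have h2 : Modifiable sim M D s e := Modifiable.right_mod hm hp hs h1
      rw [if_pos h1, if_pos h2]
    · have h2 : ¬ Modifiable sim M D s e := fun h => h1 (Modifiable.left_mod hm hp hs h)
      rw [if_neg h1, if_neg h2]
      by_contra hne
      exact h1 (Modifiable.left_ne hm hp hs hne)
  · intro t g h
    simp only [stepTo]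
    rw [if_neg h]

theorem sat_self_of_no_mod {T A U : Type*} (sim : A → A → U → U → Prop)
    (M : Finset (MD A)) (D : T → A → U) (h : ∀ t c, ¬ Modifiable sim M D t c) :
    Sat sim M D D := by
  refine ⟨?_, fun _ _ _ => rfl⟩
  rintro m hm t s hs ⟨c, e⟩ hp
  by_contra hne
  exact h t c (Modifiable.left_ne hm hp hs hne)

theorem exists_mod_ne {T A U : Type*} (sim : A → A → U → U → Prop)
    (M : Finset (MD A)) (u : U) (D : T → A → U) (t : T) (c : A)
    (h : Modifiable sim M D t c) : ∃ t c, Modifiable sim M D t c ∧ D t c ≠ u := by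
  induction h with
  | @left_ne m t s c e hm hp hs hne =>
    by_cases h1 : D t c = u
    · exact ⟨s, e, Modifiable.right_ne hm hp hs hne, fun h2 => hne (h1.trans h2.symm)⟩
    · exact ⟨t, c, Modifiable.left_ne hm hp hs hne, h1⟩
  | left_mod _ _ _ _ ih => exact ih
  | @right_ne m t s c e hm hp hs hne =>
    by_cases h1 : D t c = u
    · exact ⟨s, e, Modifiable.left_ne hm hp hs hne, fun h2 => hne (h2.trans h1.symm)⟩
    · exact ⟨t, c, Modifiable.right_ne hm hp hs hne, h1⟩
  | right_mod _ _ _ _ ih => exact ih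

theorem resolved_of_no_mod {T A U : Type*} (sim : A → A → U → U → Prop)
    (M : Finset (MD A)) (D : T → A → U) (h : ∀ t c, ¬ Modifiable sim M D t c) :
    ResolvedInstance sim M D D := by
  have := sat_self_of_no_mod sim M D h
  exact ⟨[], by simpa [List.Chain] using this, this⟩

open Classical in
theorem exists_resolved_aux {T A U : Type*} [Fintype T] [Fintype A]
    (sim : A → A → U → U → Prop) (M : Finset (MD A)) (u : U) (n : ℕ) :
    ∀ D : T → A → U, (Finset.univ.filter fun p : T × A => D p.1 p.2 ≠ u).card = n →
      ∃ D', ResolvedInstance sim M D D' := by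
  induction n using Nat.strong_induction_on with
  | _ n ih =>
    intro D hn
    by_cases h : ∀ t c, ¬ Modifiable sim M D t c
    · exact ⟨D, resolved_of_no_mod sim M D h⟩
    · push Not at h
      obtain ⟨t0, c0, h0⟩ := h
      obtain ⟨t, c, hm, hne⟩ := exists_mod_ne sim M u D t0 c0 h0
      have hlt : (Finset.univ.filter
          fun p : T × A => stepTo sim M u D p.1 p.2 ≠ u).card < n := by
        rw [← hn]
        apply Finset.card_lt_card
        rw [Finset.ssubset_iff_of_subset]
        · exact ⟨(t, c), by simpa using hne, by simp [stepTo, hm]⟩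
        · intro p hp
          rw [Finset.mem_filter] at hp ⊢
          refine ⟨Finset.mem_univ _, fun hu => hp.2 ?_⟩
          unfold stepTo
          split_ifs
          · rfl
          · exact hu
      obtain ⟨D', L, hL, hD'⟩ := ih _ hlt _ rfl
      refine ⟨D', stepTo sim M u D :: L, ?_, hD'⟩
      exact List.IsChain.cons_cons (sat_stepTo sim M u D) hL

theorem exists_resolved {T A U : Type*} [Fintype T] [Fintype A]
    (sim : A → A → U → U → Prop) (M : Finset (MD A)) (D : T → A → U) :
    ∃ D', ResolvedInstance sim M D D' := by
  by_cases hU : Nonempty U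
  · obtain ⟨u⟩ := hU
    exact exists_resolved_aux sim M u _ D rfl
  · exact ⟨D, resolved_of_no_mod sim M D fun t c _ => hU ⟨D t c⟩⟩

/-- For every instance `D` and finite set `M` of MDs, the set of minimally
resolved instances of `D` wrt `M` is nonempty. -/
theorem exists_mri {T A U : Type*} [Fintype T] [Fintype A]
    (sim : A → A → U → U → Prop)
    (hsym : ∀ (a b : A) (x y : U), sim a b x y → sim b a y x)
    (hsub : ∀ (a b : A) (x y : U), x = y → sim a b x y)
    (M : Finset (MD A)) (D : T → A → U) :
    ∃ D' : T → A → U, IsMRI sim M D D' := by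
  have hne : ∃ n, ∃ D', ResolvedInstance sim M D D' ∧ numChanges D D' = n := by
    obtain ⟨D', h⟩ := exists_resolved sim M D
    exact ⟨_, D', h, rfl⟩
  classical
  obtain ⟨D', h, hn⟩ := Nat.find_spec hne
  refine ⟨D', h, fun D'' h'' => ?_⟩
  rw [hn]
  exact Nat.find_min' hne ⟨D'', h'', rfl⟩
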